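/- Let γ ∈ (0, 1) and β ≥ 0, and define the shifted ramp loss φ_β(α) := min{1, max{0, (1 − α + β)/2}}. Then φ_β is (φ_γ, [−1, 1])-calibrated if and only if 0 < β < 2. -/

import Mathlib

/-- Class-conditional risk of a margin-based loss `φ`:
`C_φ(α, η) = η φ(α) + (1 - η) φ(-α)`. -/
noncomputable def ccr (φ : ℝ → ℝ) (α η : ℝ) : ℝ := η * φ α + (1 - η) * φ (-α)

/-- Minimal class-conditional risk over a set `A` of achievable prediction values. -/
noncomputable def ccrStar (φ : ℝ → ℝ) (A : Set ℝ) (η : ℝ) : ℝ :=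
  sInf ((fun α => ccr φ α η) '' A)

/-- Excess class-conditional risk. -/
noncomputable def ccrExcess (φ : ℝ → ℝ) (A : Set ℝ) (α η : ℝ) : ℝ :=
  ccr φ α η - ccrStar φ A η

/-- `φ` is `(ψ, A)`-calibrated. -/
def Calibrated (φ ψ : ℝ → ℝ) (A : Set ℝ) : Prop :=
  ∀ ε > (0:ℝ), ∃ δ > (0:ℝ), ∀ η ∈ Set.Icc (0:ℝ) 1, ∀ α ∈ A,
    ccr φ α η < ccrStar φ A η + δ → ccr ψ α η < ccrStar ψ A η + ε

/-- The `γ`-robust 0-1 loss `φ_γ(α) = 1{α ≤ γ}` (the 0-1 loss is the case `γ = 0`). -/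
noncomputable def robustLoss (γ : ℝ) (α : ℝ) : ℝ := if α ≤ γ then 1 else 0

/-- Quasiconcavity of a real function on ℝ. -/
def QuasiconcaveFn (h : ℝ → ℝ) : Prop :=
  ∀ α₁ α₂ l : ℝ, 0 ≤ l → l ≤ 1 → min (h α₁) (h α₂) ≤ h (l * α₁ + (1 - l) * α₂)

/-- `φ` is quasiconcave even if its even part `α ↦ φ(α) + φ(-α)` is quasiconcave. -/
def QuasiconcaveEven (φ : ℝ → ℝ) : Prop := QuasiconcaveFn (fun α => φ α + φ (-α))

theorem ccr_neg (φ : ℝ → ℝ) (α η : ℝ) : ccr φ (-α) (1 - η) = ccr φ α η := by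
  simp only [ccr, neg_neg]
  ring

theorem ccrStar_le {φ : ℝ → ℝ} (hφ : ∀ x, 0 ≤ φ x) {A : Set ℝ} {α η : ℝ} (hα : α ∈ A)
    (hη : η ∈ Set.Icc (0:ℝ) 1) : ccrStar φ A η ≤ ccr φ α η := by
  refine csInf_le ⟨0, ?_⟩ ⟨α, hα, rfl⟩
  rintro _ ⟨x, -, rfl⟩
  exact add_nonneg (mul_nonneg hη.1 (hφ x)) (mul_nonneg (sub_nonneg.2 hη.2) (hφ (-x)))

theorem le_ccrStar {φ : ℝ → ℝ} {A : Set ℝ} (hA : A.Nonempty) {η c : ℝ}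
    (h : ∀ α ∈ A, c ≤ ccr φ α η) : c ≤ ccrStar φ A η := by
  refine le_csInf (hA.image _) ?_
  rintro _ ⟨x, hx, rfl⟩
  exact h x hx

theorem robustLoss_nonneg (γ α : ℝ) : 0 ≤ robustLoss γ α := by
  unfold robustLoss
  split_ifs <;> norm_num

theorem min_le_ccr_robustLoss {γ : ℝ} (hγ : 0 ≤ γ) {η : ℝ} (hη : η ∈ Set.Icc (0:ℝ) 1) (α : ℝ) :
    min η (1 - η) ≤ ccr (robustLoss γ) α η := by
  obtain ⟨h0, h1⟩ := hη
  have := min_le_left η (1 - η)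
  have := min_le_right η (1 - η)
  unfold ccr robustLoss
  split_ifs <;> linarith

/-- A loss whose even part is minimized at the origin over `[-1, 1]` is not calibrated. -/
theorem not_calibrated_robustLoss {φ : ℝ → ℝ} {γ : ℝ} (hγ : γ ∈ Set.Ioo (0:ℝ) 1)
    (h : ∀ α ∈ Set.Icc (-1:ℝ) 1, 2 * φ 0 ≤ φ α + φ (-α)) :
    ¬ Calibrated φ (robustLoss γ) (Set.Icc (-1:ℝ) 1) := by
  intro hc
  obtain ⟨hγ0, hγ1⟩ := hγ
  have hη : (1 / 2 : ℝ) ∈ Set.Icc (0:ℝ) 1 := by norm_num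
  obtain ⟨δ, hδ, H⟩ := hc (1 / 2) (by norm_num)
  have hstar : φ 0 ≤ ccrStar φ (Set.Icc (-1:ℝ) 1) (1 / 2) :=
    le_ccrStar ⟨0, by norm_num⟩ fun α hα => by
      have := h α hα
      unfold ccr
      linarith
  have hlt := H (1 / 2) hη 0 (by norm_num) (by
    simp only [ccr, neg_zero]
    linarith)
  have hle : ccrStar (robustLoss γ) (Set.Icc (-1:ℝ) 1) (1 / 2) ≤ ccr (robustLoss γ) 1 (1 / 2) :=
    ccrStar_le (robustLoss_nonneg γ) (by norm_num) hη
  have hone : ccr (robustLoss γ) 1 (1 / 2) = 1 / 2 := by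
    rw [ccr, robustLoss, robustLoss, if_neg (by linarith), if_pos (by linarith)]
    norm_num
  have hzero : ccr (robustLoss γ) 0 (1 / 2) = 1 := by
    rw [ccr, neg_zero, robustLoss, if_pos hγ0.le]
    norm_num
  linarith

/-- If the values of `φ` on `[-1, 1]` exceed `φ 1` by `m` away from `(γ, 1]`, and its even part
is minimized at `±1` and exceeds that minimum by `m` on `[-γ, γ]`, then near-minimizers of the
`φ`-risk are near-minimizers of the `γ`-robust risk, for `η ≥ 1 / 2`. -/
theorem ccr_robustLoss_lt_of_half_le {φ : ℝ → ℝ} {γ m ε η α : ℝ} (hγ : 0 < γ) (hm : 0 < m)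
    (hε : 0 < ε)
    (hright : ∀ x ∈ Set.Icc (-1:ℝ) γ, φ 1 + m ≤ φ x)
    (heven : ∀ x ∈ Set.Icc (-1:ℝ) 1, φ 1 + φ (-1) ≤ φ x + φ (-x))
    (hmid : ∀ x ∈ Set.Icc (-γ) γ, φ 1 + φ (-1) + m ≤ φ x + φ (-x))
    (hη : η ∈ Set.Icc (1 / 2 : ℝ) 1) (hα : α ∈ Set.Icc (-1:ℝ) 1)
    (h : ccr φ α η < ccr φ 1 η + min (m / 2) (ε * m)) :
    ccr (robustLoss γ) α η < min η (1 - η) + ε := by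
  obtain ⟨h0, h1⟩ := hη
  rw [min_eq_right (by linarith : 1 - η ≤ η)]
  have hδ₁ := min_le_left (m / 2) (ε * m)
  have hδ₂ := min_le_right (m / 2) (ε * m)
  simp only [ccr] at h
  rcases lt_or_ge γ α with hα' | hα'
  · rw [ccr, robustLoss, robustLoss, if_neg (by linarith), if_pos (by linarith)]
    linarith
  have hr := hright α ⟨hα.1, hα'⟩
  rcases lt_or_ge α (-γ) with hα'' | hα''
  · rw [ccr, robustLoss, robustLoss, if_pos (by linarith), if_neg (by linarith)]
    by_contra! hcon
    have he := heven α hα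
    nlinarith [mul_nonneg (by linarith : 0 ≤ 2 * η - 1) (sub_nonneg.2 hr),
      mul_nonneg (sub_nonneg.2 h1) (sub_nonneg.2 he),
      mul_nonneg (by linarith : 0 ≤ 2 * η - 1 - ε) hm.le]
  · have he := hmid α ⟨hα'', hα'⟩
    nlinarith [mul_nonneg (by linarith : 0 ≤ 2 * η - 1) (sub_nonneg.2 hr),
      mul_nonneg (sub_nonneg.2 h1) (sub_nonneg.2 he),
      mul_nonneg (by linarith : 0 ≤ 2 * η - 1) hm.le]

theorem calibrated_robustLoss {φ : ℝ → ℝ} (hφ : ∀ x, 0 ≤ φ x) {γ m : ℝ} (hγ : 0 < γ) (hm : 0 < m)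
    (hright : ∀ x ∈ Set.Icc (-1:ℝ) γ, φ 1 + m ≤ φ x)
    (heven : ∀ x ∈ Set.Icc (-1:ℝ) 1, φ 1 + φ (-1) ≤ φ x + φ (-x))
    (hmid : ∀ x ∈ Set.Icc (-γ) γ, φ 1 + φ (-1) + m ≤ φ x + φ (-x)) :
    Calibrated φ (robustLoss γ) (Set.Icc (-1:ℝ) 1) := by
  intro ε hε
  refine ⟨min (m / 2) (ε * m), lt_min (by positivity) (by positivity), fun η hη α hα h => ?_⟩
  have hstar : min η (1 - η) ≤ ccrStar (robustLoss γ) (Set.Icc (-1:ℝ) 1) η :=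
    le_ccrStar ⟨0, by norm_num⟩ fun x _ => min_le_ccr_robustLoss hγ.le hη x
  suffices ccr (robustLoss γ) α η < min η (1 - η) + ε by linarith
  rcases le_total (1 / 2) η with hη' | hη'
  · have := ccrStar_le hφ (A := Set.Icc (-1:ℝ) 1) (α := 1) (by norm_num) hη
    exact ccr_robustLoss_lt_of_half_le hγ hm hε hright heven hmid ⟨hη', hη.2⟩ hα (by linarith)
  · have hle := ccrStar_le hφ (A := Set.Icc (-1:ℝ) 1) (α := -1) (by norm_num) hη
    have key := ccr_robustLoss_lt_of_half_le (η := 1 - η) (α := -α) hγ hm hε hright heven hmid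
      ⟨by linarith, by linarith [hη.1]⟩ ⟨by linarith [hα.2], by linarith [hα.1]⟩ (by
        rw [← ccr_neg φ (-1) η, neg_neg] at hle
        rw [ccr_neg]
        linarith)
    rwa [ccr_neg, sub_sub_cancel, min_comm] at key

theorem shiftedRamp_eq_min {β x : ℝ} (hβ : 0 ≤ β) (hx : x ≤ 1) :
    min 1 (max 0 ((1 - x + β) / 2)) = min 1 ((1 - x + β) / 2) := by
  rw [max_eq_right (by linarith)]

/-- The shifted ramp loss is `(φ_γ, [-1,1])`-calibrated iff `0 < β < 2`. -/
theorem ramp_calibrated_iff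
    (γ : ℝ) (hγ : γ ∈ Set.Ioo (0:ℝ) 1) (β : ℝ) (hβ : 0 ≤ β) :
    Calibrated (fun α => min 1 (max 0 ((1 - α + β) / 2))) (robustLoss γ)
        (Set.Icc (-1:ℝ) 1) ↔ (0 < β ∧ β < 2) := by
  obtain ⟨hγ0, hγ1⟩ := hγ
  constructor
  · intro hc
    by_contra hcon
    refine not_calibrated_robustLoss ⟨hγ0, hγ1⟩ (fun α hα => ?_) hc
    obtain ⟨hα0, hα1⟩ := hα
    rw [shiftedRamp_eq_min hβ zero_le_one, shiftedRamp_eq_min hβ hα1,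
      shiftedRamp_eq_min hβ (by linarith : -α ≤ 1)]
    rcases hβ.eq_or_lt with rfl | hβ0
    · rw [min_eq_right (by linarith), min_eq_right (by linarith), min_eq_right (by linarith)]
      linarith
    · have hβ2 : 2 ≤ β := not_lt.1 fun h => hcon ⟨hβ0, h⟩
      rw [min_eq_left (by linarith), min_eq_left (by linarith), min_eq_left (by linarith)]
      norm_num
  · rintro ⟨hβ0, hβ2⟩
    have hone : min 1 (max 0 ((1 - 1 + β) / 2)) = β / 2 := by
      rw [shiftedRamp_eq_min hβ le_rfl, min_eq_right (by linarith)]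
      ring
    have hneg : min 1 (max 0 ((1 - (-1) + β) / 2)) = 1 := by
      rw [shiftedRamp_eq_min hβ (by norm_num), min_eq_left (by linarith)]
    obtain ⟨m, hm, hm₁, hm₂, hm₃⟩ :
        ∃ m : ℝ, 0 < m ∧ m ≤ 1 - β / 2 ∧ m ≤ (1 - γ) / 2 ∧ m ≤ β / 2 :=
      ⟨min (1 - β / 2) (min ((1 - γ) / 2) (β / 2)),
        lt_min (by linarith) (lt_min (by linarith) (by linarith)), min_le_left _ _,
        (min_le_right _ _).trans (min_le_left _ _), (min_le_right _ _).trans (min_le_right _ _)⟩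
    refine calibrated_robustLoss (fun x => le_min zero_le_one (le_max_left _ _)) hγ0 hm ?_ ?_ ?_
    · rintro x ⟨hx0, hx1⟩
      rw [hone, shiftedRamp_eq_min hβ (by linarith)]
      exact le_min (by linarith) (by linarith)
    · rintro x ⟨hx0, hx1⟩
      rw [hone, hneg, shiftedRamp_eq_min hβ hx1, shiftedRamp_eq_min hβ (by linarith : -x ≤ 1)]
      rcases min_cases 1 ((1 - x + β) / 2) with h | h <;>
        rcases min_cases 1 ((1 - -x + β) / 2) with h' | h' <;> linarith
    · rintro x ⟨hx0, hx1⟩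
      rw [hone, hneg, shiftedRamp_eq_min hβ (by linarith),
        shiftedRamp_eq_min hβ (by linarith : -x ≤ 1)]
      rcases min_cases 1 ((1 - x + β) / 2) with h | h <;>
        rcases min_cases 1 ((1 - -x + β) / 2) with h' | h' <;> linarith
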